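/- (Recession estimate for Tf_hom) If f additionally satisfies (H4), then there exist C₂ > 0 and 0 < q < 1 such that |Tf_hom^∞(s,ξ) − Tf_hom(s,ξ)| ≤ C₂(1+|ξ|^{1−q}) for every (s,ξ) ∈ ℝ^d × ℝ^{d×N}, where Tf_hom^∞(s,ξ) := limsup_{t→∞} Tf_hom(s,tξ)/t and Tf_hom is extended to ℝ^d × ℝ^{d×N} by the homogenized density g_hom of the modified integrand g. -/

import Mathlib

open MeasureTheory Filter Set
open scoped ENNReal RealInnerProductSpace Topology NNReal

noncomputable section

/-- Euclidean space `ℝ^N`. -/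
abbrev EN (N : ℕ) : Type := EuclideanSpace ℝ (Fin N)

/-- `d × N` matrices, viewed as continuous linear maps `ℝ^N → ℝ^d`. -/
abbrev Mat (d N : ℕ) : Type := EN N →L[ℝ] EN d

variable {N d : ℕ}

/-- The tangent set of `M ⊆ ℝ^d` at `s`: velocities of curves in `M` through `s`. -/
def TangentSet (M : Set (EN d)) (s : EN d) : Set (EN d) :=
  {v | ∃ γ : ℝ → EN d, (∀ t, γ t ∈ M) ∧ γ 0 = s ∧ HasDerivAt γ v 0}

/-- A matrix `ξ ∈ ℝ^{d×N}` has all its columns in the tangent space `T_s M`,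
i.e. `ξ ∈ [T_s M]^N`. -/
def TangentCols (M : Set (EN d)) (s : EN d) (ξ : Mat d N) : Prop :=
  ∀ i : Fin N, ξ (EuclideanSpace.single i 1) ∈ TangentSet M s

/-- `T` is a smooth `m`-dimensional submanifold (without boundary) of `ℝ^n`,
described locally as a regular level set. -/
def IsSubmanifoldDim (n m : ℕ) (T : Set (EN n)) : Prop :=
  ∀ x ∈ T, ∃ (U : Set (EN n)) (F : EN n → EN (n - m)),
    IsOpen U ∧ x ∈ U ∧ ContDiffOn ℝ (⊤ : ℕ∞) F U ∧
    (T ∩ U = {y ∈ U | F y = 0}) ∧ ∀ y ∈ U, Function.Surjective (fderiv ℝ F y)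

/-- `M` is a nonempty compact connected smooth submanifold of `ℝ^d` without boundary. -/
def IsNiceManifold (d : ℕ) (M : Set (EN d)) : Prop :=
  M.Nonempty ∧ IsCompact M ∧ IsConnected M ∧ ∃ m : ℕ, m ≤ d ∧ IsSubmanifoldDim d m M

/-- A finite union of subsets of `(N-2)`-dimensional submanifolds of `ℝ^N`. -/
def IsSigmaSet (N : ℕ) (Sg : Set (EN N)) : Prop :=
  ∃ (k : ℕ) (S : Fin k → Set (EN N)), Sg = ⋃ i, S i ∧
    ∀ i, ∃ T : Set (EN N), IsSubmanifoldDim N (N - 2) T ∧ S i ⊆ T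

/-- `u ∈ W^{1,1}(A;ℝ^d)` with weak gradient `Du`. -/
def MemW11 (A : Set (EN N)) (u : EN N → EN d) (Du : EN N → Mat d N) : Prop :=
  IntegrableOn u A volume ∧ IntegrableOn Du A volume ∧
    ∀ φ : EN N → ℝ, ContDiff ℝ (⊤ : ℕ∞) φ → HasCompactSupport φ → tsupport φ ⊆ A →
      ∀ y : EN N, ∫ x in A, fderiv ℝ φ x y • u x = - ∫ x in A, φ x • Du x y

/-- `u` takes values in `M` almost everywhere on `A`. -/
def AeIn (A : Set (EN N)) (u : EN N → EN d) (M : Set (EN d)) : Prop :=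
  ∀ᵐ x ∂(volume.restrict A), u x ∈ M

/-- Recession function of `h : ℝ^{d×N} → ℝ`: `h^∞(ξ) = limsup_{t→∞} h(tξ)/t`. -/
def recc (h : Mat d N → ℝ) (ξ : Mat d N) : ℝ :=
  Filter.limsup (fun t : ℝ => h (t • ξ) / t) Filter.atTop

/-- The open cube `(0,t)^N`. -/
def posCube (N : ℕ) (t : ℝ) : Set (EN N) := {x | ∀ i, x i ∈ Set.Ioo (0 : ℝ) t}

/-- The open unit cube `(-1/2,1/2)^N`. -/
def unitCube (N : ℕ) : Set (EN N) := {x | ∀ i, x i ∈ Set.Ioo (-(1/2) : ℝ) (1/2)}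

/-- The cell infimum over `W^{1,∞}_0((0,t)^N; T_s M)` defining `Tf_hom`. -/
def tanCell (f : EN N → Mat d N → ℝ) (M : Set (EN d)) (s : EN d) (ξ : Mat d N)
    (t : ℝ) : ℝ :=
  sInf {c : ℝ | ∃ (φ : EN N → EN d) (K : ℝ≥0), LipschitzWith K φ ∧
    (∀ x, φ x ∈ TangentSet M s) ∧ (∀ x, x ∉ posCube N t → φ x = 0) ∧
    c = (t ^ N)⁻¹ * ∫ x in posCube N t, f x (ξ + fderiv ℝ φ x)}

/-- The tangentially homogenized density `Tf_hom` (the limit as `t → ∞`,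
realized as a limsup). -/
def Tfhom (f : EN N → Mat d N → ℝ) (M : Set (EN d)) (s : EN d) (ξ : Mat d N) : ℝ :=
  Filter.limsup (fun t => tanCell f M s ξ t) Filter.atTop

/-- The unconstrained cell infimum over `W^{1,∞}_0((0,t)^N; ℝ^d)`. -/
def freeCell (h : EN N → Mat d N → ℝ) (ξ : Mat d N) (t : ℝ) : ℝ :=
  sInf {c : ℝ | ∃ (φ : EN N → EN d) (K : ℝ≥0), LipschitzWith K φ ∧
    (∀ x, x ∉ posCube N t → φ x = 0) ∧
    c = (t ^ N)⁻¹ * ∫ x in posCube N t, h x (ξ + fderiv ℝ φ x)}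

/-- The usual homogenized density of a parametrized integrand `g(y,s,ξ)`. -/
def ghomOf (g : EN N → EN d → Mat d N → ℝ) (s : EN d) (ξ : Mat d N) : ℝ :=
  Filter.limsup (fun t => freeCell (fun y => g y s) ξ t) Filter.atTop

/-- The open cube of side `t` centered at the origin adapted to the
orthonormal basis `B`. -/
def obCube (B : OrthonormalBasis (Fin N) ℝ (EN N)) (t : ℝ) : Set (EN N) :=
  {x | ∀ i, ⟪x, B i⟫ ∈ Set.Ioo (-(t / 2)) (t / 2)}

/-- Surface cell infimum at scale `t`: infimum of `t^{1-N} ∫_{tQ_ν} h(y,∇φ)` over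
`φ ∈ W^{1,1}(tQ_ν;M)` with `φ = a` on `∂(tQ_ν) ∩ {x·ν₁ > 0}` and `φ = b`
on `∂(tQ_ν) ∩ {x·ν₁ ≤ 0}`. -/
def surfCell (h : EN N → Mat d N → ℝ) (M : Set (EN d)) (a b : EN d) (ν₁ : EN N)
    (B : OrthonormalBasis (Fin N) ℝ (EN N)) (t : ℝ) : ℝ :=
  sInf {c : ℝ | ∃ (φ : EN N → EN d) (Dφ : EN N → Mat d N),
    MemW11 (obCube B t) φ Dφ ∧ AeIn (obCube B t) φ M ∧
    (∀ x ∈ frontier (obCube B t),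
      (0 < ⟪x, ν₁⟫ → φ x = a) ∧ (⟪x, ν₁⟫ ≤ 0 → φ x = b)) ∧
    c = (t ^ (N - 1))⁻¹ * ∫ x in obCube B t, h x (Dφ x)}

/-- Surface cell infimum where moreover the adapted cube is chosen with two of
its faces orthogonal to `ν₁`. -/
def thetaCell (h : EN N → Mat d N → ℝ) (M : Set (EN d)) (a b : EN d) (ν₁ : EN N)
    (t : ℝ) : ℝ :=
  sInf {c : ℝ | ∃ B : OrthonormalBasis (Fin N) ℝ (EN N), (∃ i, B i = ν₁) ∧
    c = surfCell h M a b ν₁ B t}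

/-- The homogenized surface energy density `θ_hom` (built from `f^∞`). -/
def thetaHom (f : EN N → Mat d N → ℝ) (M : Set (EN d)) (a b : EN d) (ν₁ : EN N) : ℝ :=
  Filter.limsup (fun t => thetaCell (fun y => recc (f y)) M a b ν₁ t) Filter.atTop

/-- Strong `L¹(A;ℝ^d)`-convergence of a family `v ε → u` as `ε → 0⁺`. -/
def TendstoL1 (A : Set (EN N)) (v : ℝ → EN N → EN d) (u : EN N → EN d) : Prop :=
  Filter.Tendsto (fun ε => ∫ x in A, ‖v ε x - u x‖) (nhdsWithin 0 (Set.Ioi 0)) (nhds 0)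

/-- Γ-convergence as `ε → 0⁺` of the family `Fε` at the point `u`
(for the strong `L¹(A)`-topology) to the value `c`. -/
def GammaConvergesAt (Fε : ℝ → (EN N → EN d) → ℝ≥0∞) (A : Set (EN N))
    (u : EN N → EN d) (c : ℝ≥0∞) : Prop :=
  (∀ v : ℝ → EN N → EN d, TendstoL1 A v u →
      c ≤ Filter.liminf (fun ε => Fε ε (v ε)) (nhdsWithin 0 (Set.Ioi 0))) ∧
  (∃ v : ℝ → EN N → EN d, TendstoL1 A v u ∧
      Filter.limsup (fun ε => Fε ε (v ε)) (nhdsWithin 0 (Set.Ioi 0)) ≤ c)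

/-- The localized functional `F_ε(u,A) = ∫_A f(x/ε,∇u) dx` if
`u ∈ W^{1,1}(A;M)`, and `+∞` otherwise. -/
def FepsSet (f : EN N → Mat d N → ℝ) (M : Set (EN d)) (ε : ℝ) (u : EN N → EN d)
    (A : Set (EN N)) : ℝ≥0∞ :=
  ⨅ (Du : EN N → Mat d N) (_ : MemW11 A u Du ∧ AeIn A u M),
    ENNReal.ofReal (∫ x in A, f (ε⁻¹ • x) (Du x))

/-- The localized Γ-lower limit
`F(u,A) = inf { liminf_n F_{ε_n}(u_n,A) : u_n → u in L¹(A) }`. -/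
def GammaLow (f : EN N → Mat d N → ℝ) (M : Set (EN d)) (εseq : ℕ → ℝ)
    (u : EN N → EN d) (A : Set (EN N)) : ℝ≥0∞ :=
  ⨅ (v : ℕ → EN N → EN d)
    (_ : Filter.Tendsto (fun n => ∫ x in A, ‖v n x - u x‖) Filter.atTop (nhds 0)),
    Filter.liminf (fun n => FepsSet f M (εseq n) (v n) A) Filter.atTop

/-- Extension of `F(u,·)` to arbitrary sets `B ⊆ Ω` by outer regularity. -/
def GammaLowB (f : EN N → Mat d N → ℝ) (M : Set (EN d)) (εseq : ℕ → ℝ)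
    (u : EN N → EN d) (Ω B : Set (EN N)) : ℝ≥0∞ :=
  ⨅ (A : Set (EN N)) (_ : IsOpen A ∧ A ⊆ Ω ∧ B ⊆ A), GammaLow f M εseq u A

/-- A package certifying `u ∈ BV(Ω;ℝ^d)`, with all its measure-theoretic
attributes: absolutely continuous gradient `grad = ∇u`, approximate
discontinuity (jump) set `S`, traces `up = u⁺`, `um = u⁻`, normal `nu = ν_u`,
approximate limit `ap = ũ`, Cantor part `cm = |D^c u|` with polar density
`cd = dD^cu/d|D^cu|`. -/
structure BVPack (Ω : Set (EN N)) (u : EN N → EN d) where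
  grad : EN N → Mat d N
  S : Set (EN N)
  up : EN N → EN d
  um : EN N → EN d
  nu : EN N → EN N
  ap : EN N → EN d
  cm : Measure (EN N)
  cd : EN N → Mat d N
  integrable : IntegrableOn u Ω volume
  grad_int : IntegrableOn grad Ω volume
  S_meas : MeasurableSet S
  cm_fin : cm Set.univ ≠ ⊤
  cm_in : cm Ωᶜ = 0
  jump_int : IntegrableOn (fun x => ‖up x - um x‖) (Ω ∩ S) (μH[(N : ℝ) - 1])
  nu_unit : ∀ x ∈ S, ‖nu x‖ = 1
  jump_ne : ∀ x ∈ S, up x ≠ um x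
  cd_unit : ∀ᵐ x ∂cm, ‖cd x‖ = 1
  cm_sing : cm ⟂ₘ (volume : Measure (EN N))
  cm_nojump : cm S = 0
  ap_lim : ∀ x ∈ Ω \ S,
    Filter.Tendsto
      (fun r : ℝ => (volume (Metric.ball x r)).toReal⁻¹ *
        ∫ y in Metric.ball x r, ‖u y - ap x‖)
      (nhdsWithin 0 (Set.Ioi 0)) (nhds 0)
  jump_lim_up : ∀ x ∈ Ω ∩ S,
    Filter.Tendsto
      (fun r : ℝ => (volume (Metric.ball x r)).toReal⁻¹ *
        ∫ y in {y ∈ Metric.ball x r | 0 < ⟪y - x, nu x⟫}, ‖u y - up x‖)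
      (nhdsWithin 0 (Set.Ioi 0)) (nhds 0)
  jump_lim_um : ∀ x ∈ Ω ∩ S,
    Filter.Tendsto
      (fun r : ℝ => (volume (Metric.ball x r)).toReal⁻¹ *
        ∫ y in {y ∈ Metric.ball x r | ⟪y - x, nu x⟫ < 0}, ‖u y - um x‖)
      (nhdsWithin 0 (Set.Ioi 0)) (nhds 0)
  decomp : ∀ φ : EN N → ℝ, ContDiff ℝ (⊤ : ℕ∞) φ → HasCompactSupport φ → tsupport φ ⊆ Ω →
    ∀ y : EN N,
      ∫ x in Ω, fderiv ℝ φ x y • u x =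
        -(∫ x in Ω, φ x • grad x y) - (∫ x, φ x • cd x y ∂cm) -
          ∫ x in Ω ∩ S, (⟪nu x, y⟫ * φ x) • (up x - um x) ∂(μH[(N : ℝ) - 1])

/-- The total variation measure `|Du|` associated to a BV package. -/
def totalVar (Ω : Set (EN N)) (u : EN N → EN d) (P : BVPack Ω u) : Measure (EN N) :=
  ((volume.restrict Ω).withDensity fun x => ENNReal.ofReal ‖P.grad x‖) + P.cm +
    ((μH[(N : ℝ) - 1]).restrict (Ω ∩ P.S)).withDensity
      fun x => ENNReal.ofReal ‖P.up x - P.um x‖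

/-- The standing assumptions (Carathéodory, (H1), (H2), (H3)) on the
integrand `f`. -/
structure StdIntegrand (N d : ℕ) (f : EN N → Mat d N → ℝ) (α β L : ℝ) : Prop where
  meas : ∀ ξ : Mat d N, Measurable fun y => f y ξ
  nonneg : ∀ y ξ, 0 ≤ f y ξ
  periodic : ∀ (y : EN N) (ξ : Mat d N) (i : Fin N),
    f (y + EuclideanSpace.single i 1) ξ = f y ξ
  alpha_pos : 0 < α
  alpha_le_beta : α ≤ β
  growth : ∀ᵐ y ∂(volume : Measure (EN N)), ∀ ξ,
    α * ‖ξ‖ ≤ f y ξ ∧ f y ξ ≤ β * (1 + ‖ξ‖)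
  lip_pos : 0 < L
  lip : ∀ᵐ y ∂(volume : Measure (EN N)), ∀ ξ ξ', |f y ξ - f y ξ'| ≤ L * ‖ξ - ξ'‖

/-- Hypothesis (H4): `|f(y,ξ) - f^∞(y,ξ)| ≤ C(1+|ξ|^{1-q})`. -/
def H4 (f : EN N → Mat d N → ℝ) (C q : ℝ) : Prop :=
  0 < C ∧ 0 < q ∧ q < 1 ∧
    ∀ᵐ y ∂(volume : Measure (EN N)), ∀ ξ,
      |f y ξ - recc (f y) ξ| ≤ C * (1 + ‖ξ‖ ^ (1 - q))

/-- The projection data used to build the modified integrand `g`: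
`pr` is the nearest-point projection onto `M` on a `δ₀`-neighborhood,
`tanProj s` is the orthogonal projection of `ℝ^d` onto `T_s M` (for `s ∈ M`),
and `chi` is the smooth cut-off. -/
structure ProjData {d : ℕ} (M : Set (EN d)) where
  δ₀ : ℝ
  pr : EN d → EN d
  chi : EN d → ℝ
  tanProj : EN d → EN d →L[ℝ] EN d
  δ₀_pos : 0 < δ₀
  pr_mem : ∀ s, Metric.infDist s M < δ₀ → pr s ∈ M
  pr_nearest : ∀ s, Metric.infDist s M < δ₀ → ‖s - pr s‖ = Metric.infDist s M
  pr_lip : ∃ K : ℝ≥0, LipschitzOnWith K pr {s | Metric.infDist s M < δ₀}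
  tanProj_lip : ∃ K : ℝ≥0,
    LipschitzOnWith K (fun s => tanProj (pr s)) {s | Metric.infDist s M < δ₀}
  chi_smooth : ContDiff ℝ (⊤ : ℕ∞) chi
  chi_supp : HasCompactSupport chi
  chi_range : ∀ s, chi s ∈ Set.Icc (0 : ℝ) 1
  chi_one : ∀ s, Metric.infDist s M ≤ δ₀ / 2 → chi s = 1
  chi_zero : ∀ s, 3 * δ₀ / 4 ≤ Metric.infDist s M → chi s = 0
  tanProj_mem : ∀ s ∈ M, ∀ v, tanProj s v ∈ TangentSet M s
  tanProj_id : ∀ s ∈ M, ∀ v ∈ TangentSet M s, tanProj s v = v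
  tanProj_symm : ∀ s ∈ M, ∀ v w, ⟪tanProj s v, w⟫ = ⟪v, tanProj s w⟫

/-- The cut-off tangential projection `ℙ_s(ξ) = χ(s) P_{Π(s)} ∘ ξ`. -/
def tanP {M : Set (EN d)} (D : ProjData M) (s : EN d) (ξ : Mat d N) : Mat d N :=
  D.chi s • ((D.tanProj (D.pr s)).comp ξ)

/-- The modified integrand `g(y,s,ξ) = f(y,ℙ_s(ξ)) + |ξ - ℙ_s(ξ)|`. -/
def gOf {M : Set (EN d)} (D : ProjData M) (f : EN N → Mat d N → ℝ) :
    EN N → EN d → Mat d N → ℝ :=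
  fun y s ξ => f y (tanP D s ξ) + ‖ξ - tanP D s ξ‖

/-- The geodesic distance on `M`. -/
def geoDist (M : Set (EN d)) (a b : EN d) : ℝ :=
  sInf {l : ℝ | ∃ γ : ℝ → EN d, ContDiff ℝ (⊤ : ℕ∞) γ ∧ (∀ t, γ t ∈ M) ∧
    γ 0 = b ∧ γ 1 = a ∧ l = ∫ t in Set.Icc (0 : ℝ) 1, ‖deriv γ t‖}

/-- The class `G(a,b)` of geodesic curves between `a` and `b`. -/
def GeodClass (M : Set (EN d)) (a b : EN d) : Set (ℝ → EN d) :=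
  {γ | ContDiff ℝ (⊤ : ℕ∞) γ ∧ (∀ t, γ t ∈ M) ∧ (∀ t : ℝ, 1 / 2 ≤ t → γ t = a) ∧
    (∀ t : ℝ, t ≤ -(1 / 2 : ℝ) → γ t = b) ∧
    (∫ t : ℝ, ‖deriv γ t‖) = geoDist M a b}

/-- `I_ε(a,b,ν)`: infimum of `∫_{Q_ν} h(x/ε,∇u)` over the geodesic-boundary
class `B_ε(a,b,ν)`. -/
def Ieps (h : EN N → Mat d N → ℝ) (M : Set (EN d)) (a b : EN d) (ν₁ : EN N)
    (B : OrthonormalBasis (Fin N) ℝ (EN N)) (ε : ℝ) : ℝ :=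
  sInf {c : ℝ | ∃ (φ : EN N → EN d) (Dφ : EN N → Mat d N) (γ : ℝ → EN d),
    γ ∈ GeodClass M a b ∧ MemW11 (obCube B 1) φ Dφ ∧ AeIn (obCube B 1) φ M ∧
    (∀ x ∈ frontier (obCube B 1), φ x = γ (⟪x, ν₁⟫ / ε)) ∧
    c = ∫ x in obCube B 1, h (ε⁻¹ • x) (Dφ x)}

/-- `J_ε(a,b,ν)`: infimum of `∫_{Q_ν} h(x/ε,∇u)` with sharp-interface boundary
datum `u_{a,b,ν}`. -/
def Jeps (h : EN N → Mat d N → ℝ) (M : Set (EN d)) (a b : EN d) (ν₁ : EN N)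
    (B : OrthonormalBasis (Fin N) ℝ (EN N)) (ε : ℝ) : ℝ :=
  sInf {c : ℝ | ∃ (φ : EN N → EN d) (Dφ : EN N → Mat d N),
    MemW11 (obCube B 1) φ Dφ ∧ AeIn (obCube B 1) φ M ∧
    (∀ x ∈ frontier (obCube B 1),
      (0 < ⟪x, ν₁⟫ → φ x = a) ∧ (⟪x, ν₁⟫ ≤ 0 → φ x = b)) ∧
    c = ∫ x in obCube B 1, h (ε⁻¹ • x) (Dφ x)}

/-- The defining properties of the interfacial density `K` from the integral
representation on partitions. -/
def IsJumpRepr (Ω : Set (EN N)) (f : EN N → Mat d N → ℝ) (M : Set (EN d))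
    (εseq : ℕ → ℝ) (K : EN d → EN d → EN N → ℝ) : Prop :=
  (∀ a ∈ M, ∀ b ∈ M, ∀ ν₁ : EN N, ‖ν₁‖ = 1 → 0 ≤ K a b ν₁) ∧
  (∀ a ∈ M, ∀ b ∈ M, ContinuousOn (K a b) (Metric.sphere (0 : EN N) 1)) ∧
  (∀ a ∈ M, ∀ b ∈ M, ∀ ν₁ : EN N, ‖ν₁‖ = 1 → K a b ν₁ = K b a (-ν₁)) ∧
  (∀ T : Finset (EN d), (T : Set (EN d)) ⊆ M →
    ∀ (u : EN N → EN d) (P : BVPack Ω u),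
      (∀ᵐ x ∂(volume.restrict Ω), u x ∈ (T : Set (EN d))) →
      ∀ S : Set (EN N), MeasurableSet S → S ⊆ Ω ∩ P.S →
        GammaLowB f M εseq u Ω S =
          ENNReal.ofReal
            (∫ x in S, K (P.up x) (P.um x) (P.nu x) ∂(μH[(N : ℝ) - 1])))

end

/-
The bound in (H4) is equivalent, up to constants, to the almost homogeneity
`|h(cX) - c h(X)| ≤ C((1 + |cX|^{1-q}) + c(1 + |X|^{1-q}))` for all `c > 0`, because `h^∞` is
positively homogeneous. Almost homogeneity passes from `f` to the modified integrand, since `ℙ_s`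
is linear and norm nonincreasing, and to pointwise upper limits, so only the cell formula has to be
dealt with. There `φ ↦ cφ` matches the competitors for `ξ` and for `cξ`, and the error
`|ξ + ∇φ|^{1-q}` is linearized at `1 + |ξ|` and absorbed into the energy by coercivity; the linear
upper bound on the cell infimum shows that the absorbed part is again of order `1 + |ξ|^{1-q}`.
-/

/-! ### Almost homogeneous functions -/

section Gauge

variable {V : Type*} [NormedAddCommGroup V] {q : ℝ} {X Y : V}

/-- The gauge `1 + |X|^{1-q}` that measures the error in (H4). -/
noncomputable def sublinearGauge (q : ℝ) (X : V) : ℝ := 1 + ‖X‖ ^ (1 - q)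

theorem one_le_sublinearGauge : 1 ≤ sublinearGauge q X :=
  le_add_of_nonneg_right (by positivity)

theorem sublinearGauge_le_of_norm_le {W : Type*} [NormedAddCommGroup W] {Z : W} (hq : q ≤ 1)
    (h : ‖X‖ ≤ ‖Z‖) :
    sublinearGauge q X ≤ sublinearGauge q Z := by
  have : 0 ≤ 1 - q := sub_nonneg.2 hq
  unfold sublinearGauge
  gcongr

theorem sublinearGauge_smul_le [NormedSpace ℝ V] {c : ℝ} (hq : 0 ≤ q) (hc : 1 ≤ c) :
    sublinearGauge q (c • X) ≤ c * sublinearGauge q X := by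
  have hc0 : 0 ≤ c := zero_le_one.trans hc
  have hpow : c ^ (1 - q) ≤ c := Real.rpow_le_self_of_one_le hc (by linarith)
  have hmul : c ^ (1 - q) * ‖X‖ ^ (1 - q) ≤ c * ‖X‖ ^ (1 - q) := by gcongr
  rw [sublinearGauge, sublinearGauge, norm_smul_of_nonneg hc0, Real.mul_rpow hc0 (norm_nonneg X)]
  linarith

theorem one_add_norm_rpow_mul_le_sublinearGauge (hq₀ : 0 ≤ q) (hq₁ : q ≤ 1) :
    (1 + ‖X‖) ^ (-q) * (1 + ‖X‖) ≤ sublinearGauge q X := by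
  have hX : 0 < 1 + ‖X‖ := by positivity
  calc (1 + ‖X‖) ^ (-q) * (1 + ‖X‖) = (1 + ‖X‖) ^ (1 - q) := by
        rw [← Real.rpow_add_one hX.ne', neg_add_eq_sub]
    _ ≤ 1 ^ (1 - q) + ‖X‖ ^ (1 - q) :=
        Real.rpow_add_le_add_rpow zero_le_one (norm_nonneg X) (by linarith) (by linarith)
    _ = sublinearGauge q X := by rw [Real.one_rpow, sublinearGauge]

theorem rpow_one_sub_le {x a : ℝ} (hx : 0 ≤ x) (ha : 0 < a) (hq₀ : 0 ≤ q) (hq₁ : q ≤ 1) :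
    x ^ (1 - q) ≤ a ^ (-q) * a + a ^ (-q) * x := by
  rw [← Real.rpow_add_one ha.ne', neg_add_eq_sub]
  rcases le_or_gt x a with hxa | hax
  · exact (Real.rpow_le_rpow hx hxa (by linarith)).trans (le_add_of_nonneg_right (by positivity))
  · have hx' : 0 < x := ha.trans hax
    calc x ^ (1 - q) = x ^ (-q) * x := by rw [← Real.rpow_add_one hx'.ne', neg_add_eq_sub]
      _ ≤ a ^ (-q) * x := by
        gcongr ?_ * x
        exact Real.rpow_le_rpow_of_nonpos ha hax.le (neg_nonpos.2 hq₀)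
      _ ≤ a ^ (1 - q) + a ^ (-q) * x := le_add_of_nonneg_left (by positivity)

theorem sublinearGauge_le_add (hq₀ : 0 ≤ q) (hq₁ : q ≤ 1) :
    sublinearGauge q X ≤ 2 * sublinearGauge q Y + (1 + ‖Y‖) ^ (-q) * ‖X‖ := by
  have hlin : ‖X‖ ^ (1 - q) ≤ (1 + ‖Y‖) ^ (-q) * (1 + ‖Y‖) + (1 + ‖Y‖) ^ (-q) * ‖X‖ :=
    rpow_one_sub_le (norm_nonneg X) (by positivity) hq₀ hq₁
  have hY := one_add_norm_rpow_mul_le_sublinearGauge (X := Y) hq₀ hq₁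
  have hone := one_le_sublinearGauge (q := q) (X := Y)
  rw [sublinearGauge]
  linarith

theorem mul_one_add_norm_rpow_add_le [NormedSpace ℝ V] {c : ℝ} (hq₀ : 0 ≤ q) (hq₁ : q ≤ 1)
    (hc : 0 ≤ c) :
    c * ((1 + ‖c • X‖) ^ (-q) + (1 + ‖X‖) ^ (-q)) * (1 + ‖X‖) ≤
      2 * (sublinearGauge q (c • X) + c * sublinearGauge q X) := by
  have hX := one_add_norm_rpow_mul_le_sublinearGauge (X := X) hq₀ hq₁
  have hcX := one_add_norm_rpow_mul_le_sublinearGauge (X := c • X) hq₀ hq₁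
  have hcX₀ : 0 ≤ sublinearGauge q (c • X) := zero_le_one.trans one_le_sublinearGauge
  have hle : (1 + ‖c • X‖) ^ (-q) ≤ 1 :=
    Real.rpow_le_one_of_one_le_of_nonpos (by simp) (neg_nonpos.2 hq₀)
  calc c * ((1 + ‖c • X‖) ^ (-q) + (1 + ‖X‖) ^ (-q)) * (1 + ‖X‖)
      = c * (1 + ‖c • X‖) ^ (-q) + (1 + ‖c • X‖) ^ (-q) * ‖c • X‖
          + c * ((1 + ‖X‖) ^ (-q) * (1 + ‖X‖)) := by rw [norm_smul_of_nonneg hc]; ring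
    _ ≤ c * sublinearGauge q X + sublinearGauge q (c • X) + c * sublinearGauge q X := by
        gcongr
        · exact hle.trans one_le_sublinearGauge
        · exact le_trans (by gcongr; simp) hcX
    _ ≤ 2 * (sublinearGauge q (c • X) + c * sublinearGauge q X) := by linarith

end Gauge

theorem limsup_le_mul_limsup_add {ι : Type*} {F : Filter ι} [F.NeBot] {u v : ι → ℝ} {c K : ℝ}
    (hc : 0 ≤ c) (hu : IsBoundedUnder (· ≥ ·) F u) (hv : IsBoundedUnder (· ≤ ·) F v)
    (hv' : IsBoundedUnder (· ≥ ·) F v) (huv : ∀ᶠ i in F, u i ≤ c * v i + K) :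
    limsup u F ≤ c * limsup v F + K := by
  have hmono : Monotone fun x : ℝ => c * x + K := fun x y hxy =>
    add_le_add_left (mul_le_mul_of_nonneg_left hxy hc) K
  calc limsup u F ≤ limsup (fun i => c * v i + K) F :=
        limsup_le_limsup huv hu.isCoboundedUnder_le (hmono.isBoundedUnder_le_comp hv)
    _ = c * limsup v F + K :=
        (hmono.map_limsup_of_continuousAt v (by fun_prop) hv hv'.isCoboundedUnder_le).symm

open scoped Pointwise in
theorem limsup_const_mul_of_pos {ι : Type*} {F : Filter ι} (u : ι → ℝ) {c : ℝ} (hc : 0 < c) :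
    limsup (fun i => c * u i) F = c * limsup u F := by
  have hset : {a | ∀ᶠ i in F, c * u i ≤ a} = c • {a | ∀ᶠ i in F, u i ≤ a} := by
    ext a
    simp only [mem_smul_set_iff_inv_smul_mem₀ hc.ne', mem_ofPred_eq, smul_eq_mul,
      le_inv_mul_iff₀ hc]
  rw [limsup_eq, limsup_eq, hset, Real.sInf_smul_of_nonneg hc.le, smul_eq_mul]

/-- Homogeneity of degree one up to an error measured by `sublinearGauge`. Only an upper bound is
required: applied to `c⁻¹` and `c • X` it yields the matching lower bound. -/
def AlmostHomogeneous {V : Type*} [NormedAddCommGroup V] [NormedSpace ℝ V] (C q : ℝ)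
    (h : V → ℝ) : Prop :=
  ∀ ⦃c : ℝ⦄, 0 < c → ∀ X,
    h (c • X) ≤ c * h X + C * (sublinearGauge q (c • X) + c * sublinearGauge q X)

namespace AlmostHomogeneous

variable {V W : Type*} [NormedAddCommGroup V] [NormedSpace ℝ V] [NormedAddCommGroup W]
  [NormedSpace ℝ W] {C q : ℝ} {h : V → ℝ}

theorem mul_le_map_smul_add (hh : AlmostHomogeneous C q h) {c : ℝ} (hc : 0 < c) (X : V) :
    c * h X ≤ h (c • X) + C * (sublinearGauge q (c • X) + c * sublinearGauge q X) := by
  have hinv := hh (inv_pos.2 hc) (c • X)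
  rw [inv_smul_smul₀ hc.ne'] at hinv
  calc c * h X
      ≤ c * (c⁻¹ * h (c • X) +
          C * (sublinearGauge q X + c⁻¹ * sublinearGauge q (c • X))) := by gcongr
    _ = h (c • X) + C * (sublinearGauge q (c • X) + c * sublinearGauge q X) := by
      field_simp
      ring

theorem abs_div_sub_le (hh : AlmostHomogeneous C q h) (hC : 0 ≤ C) (hq : 0 ≤ q) {t : ℝ}
    (ht : 1 ≤ t) (X : V) : |h (t • X) / t - h X| ≤ 2 * C * sublinearGauge q X := by
  have ht₀ : 0 < t := zero_lt_one.trans_le ht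
  have herr : C * (sublinearGauge q (t • X) + t * sublinearGauge q X) ≤
      C * (t * sublinearGauge q X + t * sublinearGauge q X) := by
    gcongr
    exact sublinearGauge_smul_le hq ht
  have hupper := hh ht₀ X
  have hlower := hh.mul_le_map_smul_add ht₀ X
  rw [div_sub' ht₀.ne', abs_div, abs_of_pos ht₀, div_le_iff₀ ht₀, abs_le]
  constructor <;> linarith

theorem comp_continuousLinearMap (hh : AlmostHomogeneous C q h) (hC : 0 ≤ C) (hq : q ≤ 1)
    {P : W →L[ℝ] V} (hP : ‖P‖ ≤ 1) : AlmostHomogeneous C q fun X => h (P X) := by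
  have hgauge (X : W) : sublinearGauge q (P X) ≤ sublinearGauge q X :=
    sublinearGauge_le_of_norm_le hq ((P.le_of_opNorm_le hP X).trans_eq (one_mul _))
  intro c hc X
  simp only [map_smul]
  calc h (c • P X)
      ≤ c * h (P X) + C * (sublinearGauge q (c • P X) + c * sublinearGauge q (P X)) := hh hc _
    _ ≤ c * h (P X) + C * (sublinearGauge q (c • X) + c * sublinearGauge q X) := by
      rw [← map_smul]
      gcongr <;> exact hgauge _

theorem add_of_map_smul (hh : AlmostHomogeneous C q h) {k : V → ℝ}
    (hk : ∀ ⦃c : ℝ⦄, 0 < c → ∀ X, k (c • X) = c * k X) :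
    AlmostHomogeneous C q fun X => h X + k X := by
  intro c hc X
  have hhX := hh hc X
  simp only [hk hc]
  linarith

theorem limsup {ι : Type*} {F : Filter ι} [F.NeBot] {v : ι → V → ℝ}
    (hv : ∀ᶠ i in F, AlmostHomogeneous C q (v i))
    (hle : ∀ X, IsBoundedUnder (· ≤ ·) F fun i => v i X)
    (hge : ∀ X, IsBoundedUnder (· ≥ ·) F fun i => v i X) :
    AlmostHomogeneous C q fun X => Filter.limsup (fun i => v i X) F :=
  fun _ hc X => limsup_le_mul_limsup_add hc.le (hge _) (hle X) (hge X) (hv.mono fun _ hi => hi hc X)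

theorem smul_le_of_coercive (hh : AlmostHomogeneous C q h) (hC : 0 ≤ C) (hq₀ : 0 ≤ q)
    (hq₁ : q ≤ 1) {α : ℝ} (hα : 0 < α) (hcoer : ∀ X, α * ‖X‖ ≤ h X) {c : ℝ} (hc : 0 < c)
    (X Y : V) :
    h (c • X) ≤ c * (1 + C / α * ((1 + ‖c • Y‖) ^ (-q) + (1 + ‖Y‖) ^ (-q))) * h X +
      2 * C * (sublinearGauge q (c • Y) + c * sublinearGauge q Y) := by
  have hnorm : ‖X‖ ≤ h X / α := (le_div_iff₀' hα).2 (hcoer X)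
  set a := (1 + ‖c • Y‖) ^ (-q)
  set b := (1 + ‖Y‖) ^ (-q)
  have hscaled : sublinearGauge q (c • X) ≤ 2 * sublinearGauge q (c • Y) + a * (c * ‖X‖) := by
    rw [← norm_smul_of_nonneg hc.le X]
    exact sublinearGauge_le_add hq₀ hq₁
  calc h (c • X) ≤ c * h X + C * (sublinearGauge q (c • X) + c * sublinearGauge q X) := hh hc X
    _ ≤ c * h X + C * ((2 * sublinearGauge q (c • Y) + a * (c * ‖X‖)) +
          c * (2 * sublinearGauge q Y + b * ‖X‖)) := by
        gcongr
        exact sublinearGauge_le_add hq₀ hq₁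
    _ = c * h X + C * c * (a + b) * ‖X‖ +
          2 * C * (sublinearGauge q (c • Y) + c * sublinearGauge q Y) := by ring
    _ ≤ c * h X + C * c * (a + b) * (h X / α) +
          2 * C * (sublinearGauge q (c • Y) + c * sublinearGauge q Y) := by gcongr
    _ = c * (1 + C / α * (a + b)) * h X +
          2 * C * (sublinearGauge q (c • Y) + c * sublinearGauge q Y) := by ring

end AlmostHomogeneous

section Recession

variable {N d : ℕ} {h : Mat d N → ℝ} {C q : ℝ}

theorem recc_smul (h : Mat d N → ℝ) {c : ℝ} (hc : 0 < c) (X : Mat d N) :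
    recc h (c • X) = c * recc h X := by
  have hscale : map (· * c) atTop = atTop := (OrderIso.mulRight₀ c hc).map_atTop
  have hquot (r : ℝ) : h (r • c • X) / r = c * (h ((r * c) • X) / (r * c)) := by
    rw [smul_smul, mul_comm r c, ← div_div, mul_div_assoc', mul_div_assoc', mul_div_cancel_left₀]
    exact hc.ne'
  calc recc h (c • X) = limsup (fun r => c * (h ((r * c) • X) / (r * c))) atTop :=
        congrArg (limsup · atTop) (funext hquot)
    _ = c * limsup (fun r => h (r • X) / r) (map (· * c) atTop) := limsup_const_mul_of_pos _ hc
    _ = c * recc h X := by rw [hscale, recc]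

theorem almostHomogeneous_of_abs_sub_recc_le
    (hh : ∀ X, |h X - recc h X| ≤ C * sublinearGauge q X) : AlmostHomogeneous C q h := by
  intro c hc X
  have hcX : h (c • X) - recc h (c • X) ≤ C * sublinearGauge q (c • X) := (abs_le.1 (hh _)).2
  have hX : c * (recc h X - h X) ≤ c * (C * sublinearGauge q X) := by
    gcongr
    linarith [(abs_le.1 (hh X)).1]
  rw [recc_smul h hc] at hcX
  linarith

theorem AlmostHomogeneous.abs_recc_sub_le (hh : AlmostHomogeneous C q h) (hC : 0 ≤ C)
    (hq : 0 ≤ q) (X : Mat d N) : |recc h X - h X| ≤ 2 * C * sublinearGauge q X := by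
  have hbound : ∀ᶠ t : ℝ in atTop, |h (t • X) / t - h X| ≤ 2 * C * sublinearGauge q X :=
    (eventually_ge_atTop 1).mono fun t ht => hh.abs_div_sub_le hC hq ht X
  have hle : ∀ᶠ t : ℝ in atTop, h (t • X) / t ≤ h X + 2 * C * sublinearGauge q X :=
    hbound.mono fun t ht => by linarith [(abs_le.1 ht).2]
  have hge : ∀ᶠ t : ℝ in atTop, h X - 2 * C * sublinearGauge q X ≤ h (t • X) / t :=
    hbound.mono fun t ht => by linarith [(abs_le.1 ht).1]
  have hupper : recc h X ≤ h X + 2 * C * sublinearGauge q X :=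
    limsup_le_of_le (isBoundedUnder_of_eventually_ge hge).isCoboundedUnder_le hle
  have hlower : h X - 2 * C * sublinearGauge q X ≤ recc h X :=
    le_limsup_of_frequently_le hge.frequently (isBoundedUnder_of_eventually_le hle)
  exact abs_sub_le_iff.2 ⟨by linarith, by linarith⟩

end Recession

/-! ### The cell formula -/

theorem aemeasurable_comp_of_ae_continuous {Ω E : Type*} [MeasurableSpace Ω] {μ : Measure Ω}
    [TopologicalSpace E] {h : Ω → E → ℝ} (hmeas : ∀ X, Measurable fun y => h y X)
    (hcont : ∀ᵐ y ∂μ, Continuous (h y)) {G : Ω → E} (hG : StronglyMeasurable G) :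
    AEMeasurable (fun y => h y (G y)) μ :=
  aemeasurable_of_tendsto_metrizable_ae'
    (fun n => ((hG.approx n).measurable_bind (fun X y => h y X) hmeas).aemeasurable)
    (hcont.mono fun y hy => (hy.tendsto _).comp (hG.tendsto_approx y))

/-- Carathéodory integrands with linear growth from below and above, as in (H2). They need not be
periodic, and the lower bound makes them nonnegative almost everywhere. -/
structure LinearGrowthIntegrand {N d : ℕ} (h : EN N → Mat d N → ℝ) (α β : ℝ) : Prop where
  measurable : ∀ X, Measurable fun y => h y X
  continuous : ∀ᵐ y, Continuous (h y)
  coercive_pos : 0 < α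
  lower : ∀ᵐ y, ∀ X, α * ‖X‖ ≤ h y X
  upper : ∀ᵐ y, ∀ X, h y X ≤ β * (1 + ‖X‖)

section Cell

variable {N d : ℕ} {T : ℝ}

theorem volume_posCube (N : ℕ) (T : ℝ) : volume (posCube N T) = ENNReal.ofReal T ^ N := by
  have hpre : posCube N T = (MeasurableEquiv.toLp 2 (Fin N → ℝ)).symm ⁻¹'
      univ.pi fun _ => Ioo 0 T := by
    ext x
    simp [posCube]
  rw [hpre, (EuclideanSpace.volume_preserving_symm_measurableEquiv_toLp (Fin N)).measure_preimage
    (MeasurableSet.univ_pi fun _ => measurableSet_Ioo).nullMeasurableSet, Real.volume_pi_Ioo]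
  simp

theorem volume_posCube_ne_top : volume (posCube N T) ≠ ∞ := by
  simp [volume_posCube]

theorem inv_pow_mul_setIntegral_posCube_const (hT : 0 < T) (K : ℝ) :
    (T ^ N)⁻¹ * ∫ _ in posCube N T, K = K := by
  have hvol : volume.real (posCube N T) = T ^ N := by
    simp [Measure.real, volume_posCube, hT.le]
  rw [setIntegral_const, hvol, smul_eq_mul, inv_mul_cancel_left₀ (by positivity)]

variable {h : EN N → Mat d N → ℝ} {X : Mat d N}

theorem le_freeCell {a : ℝ}
    (ha : ∀ (φ : EN N → EN d) (K : ℝ≥0), LipschitzWith K φ → (∀ x, x ∉ posCube N T → φ x = 0) →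
      a ≤ (T ^ N)⁻¹ * ∫ x in posCube N T, h x (X + fderiv ℝ φ x)) :
    a ≤ freeCell h X T := by
  refine le_csInf ⟨_, fun _ => 0, 0, LipschitzWith.const 0, fun _ _ => rfl, rfl⟩ ?_
  rintro _ ⟨φ, K, hφ, hφ₀, rfl⟩
  exact ha φ K hφ hφ₀

namespace LinearGrowthIntegrand

variable {α β : ℝ}

theorem ae_nonneg (hh : LinearGrowthIntegrand h α β) : ∀ᵐ y, ∀ X, 0 ≤ h y X :=
  hh.lower.mono fun _ hy X => (mul_nonneg hh.coercive_pos.le (norm_nonneg X)).trans (hy X)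

theorem upper_nonneg (hh : LinearGrowthIntegrand h α β) : 0 ≤ β := by
  obtain ⟨y, hy, hy'⟩ := (hh.ae_nonneg.and hh.upper).exists
  simpa using (hy 0).trans (hy' 0)

theorem integrableOn_comp (hh : LinearGrowthIntegrand h α β) {s : Set (EN N)}
    (hs : volume s ≠ ∞) {G : EN N → Mat d N} (hG : StronglyMeasurable G) {B : ℝ}
    (hB : ∀ y, ‖G y‖ ≤ B) : IntegrableOn (fun y => h y (G y)) s := by
  refine Measure.integrableOn_of_bounded (M := β * (1 + B)) hs
    (aemeasurable_comp_of_ae_continuous hh.measurable hh.continuous hG).aestronglyMeasurable ?_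
  filter_upwards [ae_restrict_of_ae hh.ae_nonneg, ae_restrict_of_ae hh.upper] with y hy hy'
  have hβ := hh.upper_nonneg
  rw [Real.norm_of_nonneg (hy _)]
  exact (hy' _).trans (by gcongr; exact hB y)

theorem integrableOn_add_fderiv (hh : LinearGrowthIntegrand h α β) (X : Mat d N)
    {φ : EN N → EN d} {K : ℝ≥0} (hφ : LipschitzWith K φ) :
    IntegrableOn (fun x => h x (X + fderiv ℝ φ x)) (posCube N T) :=
  hh.integrableOn_comp volume_posCube_ne_top
    ((measurable_fderiv ℝ φ).const_add X).stronglyMeasurable (B := ‖X‖ + K)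
    fun _ => norm_add_le_of_le le_rfl (norm_fderiv_le_of_lipschitz ℝ hφ)

theorem inv_pow_mul_setIntegral_nonneg (hh : LinearGrowthIntegrand h α β) (hT : 0 ≤ T)
    (G : EN N → Mat d N) : 0 ≤ (T ^ N)⁻¹ * ∫ x in posCube N T, h x (G x) :=
  mul_nonneg (by positivity)
    (integral_nonneg_of_ae (ae_restrict_of_ae (hh.ae_nonneg.mono fun _ hx => hx _)))

theorem freeCell_nonneg (hh : LinearGrowthIntegrand h α β) (hT : 0 ≤ T) : 0 ≤ freeCell h X T :=
  le_freeCell fun _ _ _ _ => hh.inv_pow_mul_setIntegral_nonneg hT _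

theorem freeCell_le (hh : LinearGrowthIntegrand h α β) (hT : 0 ≤ T) {φ : EN N → EN d} {K : ℝ≥0}
    (hφ : LipschitzWith K φ) (hφ₀ : ∀ x, x ∉ posCube N T → φ x = 0) :
    freeCell h X T ≤ (T ^ N)⁻¹ * ∫ x in posCube N T, h x (X + fderiv ℝ φ x) := by
  refine csInf_le ⟨0, ?_⟩ ⟨φ, K, hφ, hφ₀, rfl⟩
  rintro _ ⟨ψ, -, -, -, rfl⟩
  exact hh.inv_pow_mul_setIntegral_nonneg hT _

theorem freeCell_le_upper (hh : LinearGrowthIntegrand h α β) (hT : 0 < T) :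
    freeCell h X T ≤ β * (1 + ‖X‖) :=
  calc freeCell h X T
      ≤ (T ^ N)⁻¹ * ∫ x in posCube N T, h x (X + fderiv ℝ (fun _ => (0 : EN d)) x) :=
        hh.freeCell_le hT.le (LipschitzWith.const 0) fun _ _ => rfl
    _ ≤ (T ^ N)⁻¹ * ∫ _ in posCube N T, β * (1 + ‖X‖) := by
        gcongr ?_ * ?_
        refine setIntegral_mono_ae (hh.integrableOn_add_fderiv X (LipschitzWith.const 0))
          (integrableOn_const volume_posCube_ne_top) (hh.upper.mono fun x hx => ?_)
        simpa using hx X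
    _ = β * (1 + ‖X‖) := inv_pow_mul_setIntegral_posCube_const hT _

theorem freeCell_smul_le (hh : LinearGrowthIntegrand h α β) (hT : 0 < T) {c a K : ℝ} (ha : 0 < a)
    (hc : ∀ᵐ y, ∀ Y, h y (c • Y) ≤ a * h y Y + K) (X : Mat d N) :
    freeCell h (c • X) T ≤ a * freeCell h X T + K := by
  rw [← sub_le_iff_le_add, ← div_le_iff₀' ha]
  refine le_freeCell fun φ k hφ hφ₀ => ?_
  rw [div_le_iff₀' ha, sub_le_iff_le_add]
  have hcφ : LipschitzWith (‖c‖₊ * k) (c • φ) := (lipschitzWith_smul c).comp hφ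
  have hint : IntegrableOn (fun x => h x (X + fderiv ℝ φ x)) (posCube N T) :=
    hh.integrableOn_add_fderiv X hφ
  have hK : IntegrableOn (fun _ => K) (posCube N T) := integrableOn_const volume_posCube_ne_top
  calc freeCell h (c • X) T
      ≤ (T ^ N)⁻¹ * ∫ x in posCube N T, h x (c • X + fderiv ℝ (c • φ) x) :=
        hh.freeCell_le hT.le hcφ fun x hx => by simp [hφ₀ x hx]
    _ ≤ (T ^ N)⁻¹ * ∫ x in posCube N T, (a * h x (X + fderiv ℝ φ x) + K) := by
        gcongr ?_ * ?_
        refine setIntegral_mono_ae (hh.integrableOn_add_fderiv _ hcφ)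
          ((hint.const_mul a).add hK) (hc.mono fun x hx => ?_)
        simpa only [fderiv_const_smul_field, Pi.smul_apply, smul_add] using hx (X + fderiv ℝ φ x)
    _ = a * ((T ^ N)⁻¹ * ∫ x in posCube N T, h x (X + fderiv ℝ φ x)) + K := by
        rw [integral_add (hint.const_mul a) hK, integral_const_mul, mul_add,
          inv_pow_mul_setIntegral_posCube_const hT, mul_left_comm]

variable {C q : ℝ}

theorem almostHomogeneous_freeCell (hh : LinearGrowthIntegrand h α β) (hC : 0 ≤ C) (hq₀ : 0 ≤ q)
    (hq₁ : q ≤ 1) (hhom : ∀ᵐ y, AlmostHomogeneous C q (h y)) (hT : 0 < T) :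
    AlmostHomogeneous (2 * C * (1 + β / α)) q fun X => freeCell h X T := by
  intro c hc X
  have hα := hh.coercive_pos
  have hweight := mul_one_add_norm_rpow_add_le (X := X) hq₀ hq₁ hc.le
  set w := (1 + ‖c • X‖) ^ (-q) + (1 + ‖X‖) ^ (-q)
  set G := sublinearGauge q (c • X) + c * sublinearGauge q X
  calc freeCell h (c • X) T ≤ c * (1 + C / α * w) * freeCell h X T + 2 * C * G := by
        refine hh.freeCell_smul_le hT (by positivity) ?_ X
        filter_upwards [hhom, hh.lower] with y hy hlow Y
        exact hy.smul_le_of_coercive hC hq₀ hq₁ hα hlow hc Y X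
    _ = c * freeCell h X T + C / α * (c * w * freeCell h X T) + 2 * C * G := by ring
    _ ≤ c * freeCell h X T + C / α * (c * w * (β * (1 + ‖X‖))) + 2 * C * G := by
        gcongr
        exact hh.freeCell_le_upper hT
    _ = c * freeCell h X T + C / α * β * (c * w * (1 + ‖X‖)) + 2 * C * G := by ring
    _ ≤ c * freeCell h X T + C / α * β * (2 * G) + 2 * C * G := by
        have hβ := hh.upper_nonneg
        gcongr
    _ = c * freeCell h X T + 2 * C * (1 + β / α) * G := by ring

theorem almostHomogeneous_limsup_freeCell (hh : LinearGrowthIntegrand h α β) (hC : 0 ≤ C)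
    (hq₀ : 0 ≤ q) (hq₁ : q ≤ 1) (hhom : ∀ᵐ y, AlmostHomogeneous C q (h y)) :
    AlmostHomogeneous (2 * C * (1 + β / α)) q fun X => limsup (fun T => freeCell h X T) atTop := by
  have hpos : ∀ᶠ T : ℝ in atTop, 0 < T := eventually_gt_atTop 0
  exact .limsup (hpos.mono fun T hT => hh.almostHomogeneous_freeCell hC hq₀ hq₁ hhom hT)
    (fun X => isBoundedUnder_of_eventually_le (hpos.mono fun T hT => hh.freeCell_le_upper hT))
    (fun X => isBoundedUnder_of_eventually_ge (hpos.mono fun T hT => hh.freeCell_nonneg hT.le))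

end LinearGrowthIntegrand

end Cell

/-! ### The modified integrand -/

theorem norm_compL_apply_le {E F G : Type*} [NormedAddCommGroup E] [NormedSpace ℝ E]
    [NormedAddCommGroup F] [NormedSpace ℝ F] [NormedAddCommGroup G] [NormedSpace ℝ G]
    (A : F →L[ℝ] G) : ‖ContinuousLinearMap.compL ℝ E F G A‖ ≤ ‖A‖ :=
  ContinuousLinearMap.opNorm_le_bound _ (norm_nonneg A) A.opNorm_comp_le

section Modified

variable {N d : ℕ} {α β : ℝ} {f : EN N → Mat d N → ℝ}

theorem StdIntegrand.linearGrowthIntegrand {L : ℝ} (hf : StdIntegrand N d f α β L) :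
    LinearGrowthIntegrand f α β where
  measurable := hf.meas
  continuous := hf.lip.mono fun y hy =>
    (LipschitzWith.of_dist_le_mul (K := ⟨L, hf.lip_pos.le⟩) fun ξ ξ' => by
      rw [Real.dist_eq, dist_eq_norm]
      exact hy ξ ξ').continuous
  coercive_pos := hf.alpha_pos
  lower := hf.growth.mono fun _ hy X => (hy X).1
  upper := hf.growth.mono fun _ hy X => (hy X).2

theorem LinearGrowthIntegrand.add_norm_sub (hf : LinearGrowthIntegrand f α β)
    {P : Mat d N →L[ℝ] Mat d N} (hP : ‖P‖ ≤ 1) :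
    LinearGrowthIntegrand (fun y X => f y (P X) + ‖X - P X‖) (min α 1) (β + 2) where
  measurable X := (hf.measurable _).add_const _
  continuous := hf.continuous.mono fun y hy => by fun_prop
  coercive_pos := lt_min hf.coercive_pos one_pos
  lower := hf.lower.mono fun y hy X =>
    calc min α 1 * ‖X‖ ≤ min α 1 * (‖P X‖ + ‖X - P X‖) := by
          have := hf.coercive_pos
          gcongr
          exact norm_le_norm_add_norm_sub' X (P X)
      _ = min α 1 * ‖P X‖ + min α 1 * ‖X - P X‖ := mul_add _ _ _
      _ ≤ α * ‖P X‖ + 1 * ‖X - P X‖ := by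
          gcongr
          exacts [min_le_left _ _, min_le_right _ _]
      _ ≤ f y (P X) + ‖X - P X‖ := by rw [one_mul]; gcongr; exact hy _
  upper := hf.upper.mono fun y hy X => by
    have hPX : ‖P X‖ ≤ ‖X‖ := (P.le_of_opNorm_le hP X).trans_eq (one_mul _)
    have hβ := hf.upper_nonneg
    calc f y (P X) + ‖X - P X‖ ≤ β * (1 + ‖P X‖) + (‖X‖ + ‖P X‖) :=
          add_le_add (hy _) (norm_sub_le _ _)
      _ ≤ β * (1 + ‖X‖) + (‖X‖ + ‖X‖) := by gcongr
      _ ≤ (β + 2) * (1 + ‖X‖) := by linarith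

theorem AlmostHomogeneous.add_norm_sub {V : Type*} [NormedAddCommGroup V] [NormedSpace ℝ V]
    {C q : ℝ} {h : V → ℝ} (hh : AlmostHomogeneous C q h) (hC : 0 ≤ C) (hq : q ≤ 1)
    {P : V →L[ℝ] V} (hP : ‖P‖ ≤ 1) : AlmostHomogeneous C q fun X => h (P X) + ‖X - P X‖ :=
  (hh.comp_continuousLinearMap hC hq hP).add_of_map_smul fun c hc X => by
    rw [map_smul, ← smul_sub, norm_smul_of_nonneg hc.le]

variable {M : Set (EN d)}

/-- The cut-off tangential projection `ℙ_s` as a continuous linear map on matrices. -/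
noncomputable def ProjData.tanPCLM (D : ProjData M) (N : ℕ) (s : EN d) : Mat d N →L[ℝ] Mat d N :=
  ContinuousLinearMap.compL ℝ (EN N) (EN d) (EN d) (D.chi s • D.tanProj (D.pr s))

theorem ProjData.gOf_eq (D : ProjData M) (f : EN N → Mat d N → ℝ) (y : EN N) (s : EN d) :
    gOf D f y s = fun X => f y (D.tanPCLM N s X) + ‖X - D.tanPCLM N s X‖ :=
  rfl

theorem ProjData.norm_tanProj_le_one (D : ProjData M) {s : EN d} (hs : s ∈ M) :
    ‖D.tanProj s‖ ≤ 1 := by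
  refine ContinuousLinearMap.opNorm_le_bound _ zero_le_one fun v => ?_
  have hidem : D.tanProj s (D.tanProj s v) = D.tanProj s v :=
    D.tanProj_id s hs _ (D.tanProj_mem s hs v)
  have hsq : ‖D.tanProj s v‖ * ‖D.tanProj s v‖ ≤ ‖v‖ * ‖D.tanProj s v‖ :=
    calc ‖D.tanProj s v‖ * ‖D.tanProj s v‖ = ⟪D.tanProj s v, D.tanProj s v⟫ :=
          (real_inner_self_eq_norm_mul_norm _).symm
      _ = ⟪v, D.tanProj s v⟫ := by rw [D.tanProj_symm s hs, hidem]
      _ ≤ ‖v‖ * ‖D.tanProj s v‖ := real_inner_le_norm _ _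
  rw [one_mul]
  rcases (norm_nonneg (D.tanProj s v)).eq_or_lt with hzero | hpos
  · exact hzero ▸ norm_nonneg v
  · exact le_of_mul_le_mul_right hsq hpos

theorem ProjData.norm_tanPCLM_le_one (D : ProjData M) (N : ℕ) (s : EN d) :
    ‖D.tanPCLM N s‖ ≤ 1 := by
  obtain ⟨hchi₀, hchi₁⟩ := D.chi_range s
  have hcutoff : ‖D.chi s • D.tanProj (D.pr s)‖ ≤ 1 := by
    rcases lt_or_ge (Metric.infDist s M) D.δ₀ with hs | hs
    · rw [norm_smul_of_nonneg hchi₀ (D.tanProj (D.pr s))]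
      exact mul_le_one₀ hchi₁ (norm_nonneg _) (D.norm_tanProj_le_one (D.pr_mem s hs))
    · rw [D.chi_zero s (by linarith [D.δ₀_pos]), zero_smul ℝ (D.tanProj (D.pr s)), norm_zero]
      exact zero_le_one
  exact (norm_compL_apply_le _).trans hcutoff

theorem LinearGrowthIntegrand.gOf (hf : LinearGrowthIntegrand f α β) (D : ProjData M) (s : EN d) :
    LinearGrowthIntegrand (fun y => gOf D f y s) (min α 1) (β + 2) := by
  simpa only [D.gOf_eq] using hf.add_norm_sub (D.norm_tanPCLM_le_one N s)

theorem H4.almostHomogeneous_gOf {C q : ℝ} (hf4 : H4 f C q) (D : ProjData M) (s : EN d) :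
    ∀ᵐ y, AlmostHomogeneous C q (gOf D f y s) := by
  obtain ⟨hC, -, hq₁, hrecc⟩ := hf4
  filter_upwards [hrecc] with y hy
  rw [D.gOf_eq]
  exact (almostHomogeneous_of_abs_sub_recc_le hy).add_norm_sub hC.le hq₁.le
    (D.norm_tanPCLM_le_one N s)

end Modified

theorem statement_8_general {N d : ℕ} {M : Set (EN d)} {f : EN N → Mat d N → ℝ} {α β C q : ℝ}
    (hf : LinearGrowthIntegrand f α β) (hf4 : H4 f C q) (D : ProjData M) :
    ∃ C₂ : ℝ, 0 < C₂ ∧ ∀ (s : EN d) (ξ : Mat d N),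
      |recc (ghomOf (gOf D f) s) ξ - ghomOf (gOf D f) s ξ| ≤ C₂ * (1 + ‖ξ‖ ^ (1 - q)) := by
  have hC : 0 < C := hf4.1
  have hq₀ : 0 ≤ q := hf4.2.1.le
  have hq₁ : q ≤ 1 := hf4.2.2.1.le
  have hα : 0 < min α 1 := lt_min hf.coercive_pos one_pos
  have hβ : 0 ≤ β := hf.upper_nonneg
  refine ⟨2 * (2 * C * (1 + (β + 2) / min α 1)), by positivity, fun s => ?_⟩
  have hhom : AlmostHomogeneous (2 * C * (1 + (β + 2) / min α 1)) q (ghomOf (gOf D f) s) :=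
    (hf.gOf D s).almostHomogeneous_limsup_freeCell hC.le hq₀ hq₁ (hf4.almostHomogeneous_gOf D s)
  exact hhom.abs_recc_sub_le (by positivity) hq₀

/-- Recession estimate for `Tf_hom`: under (H4), the
(extended) tangentially homogenized density satisfies
`|Tf_hom^∞(s,ξ) - Tf_hom(s,ξ)| ≤ C₂(1+|ξ|^{1-q})` on all of
`ℝ^d × ℝ^{d×N}`. -/
theorem statement_8
    (N d : ℕ) (M : Set (EN d)) (hM : IsNiceManifold d M)
    (f : EN N → Mat d N → ℝ) (α β L C q : ℝ) (hf : StdIntegrand N d f α β L)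
    (hf4 : H4 f C q) (D : ProjData M) :
    ∃ C₂ q' : ℝ, 0 < C₂ ∧ 0 < q' ∧ q' < 1 ∧
      ∀ (s : EN d) (ξ : Mat d N),
        |recc (ghomOf (gOf D f) s) ξ - ghomOf (gOf D f) s ξ| ≤
          C₂ * (1 + ‖ξ‖ ^ (1 - q')) := by
  obtain ⟨C₂, hC₂, hbound⟩ := statement_8_general hf.linearGrowthIntegrand hf4 D
  exact ⟨C₂, q, hC₂, hf4.2.1, hf4.2.2.1, hbound⟩
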